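/- (Singleton bound for (P,w)-codes) Let C ⊆ 𝔽_q^n be a code with at least two codewords and minimum distance d_{(P,w)}(C). Then ⌊(d_{(P,w)}(C)−1)/M_w⌋ ≤ n − ⌈log_q |C|⌉. -/

import Mathlib

open scoped Classical

noncomputable section

variable {F : Type*} [Field F] [Fintype F]
variable {ι : Type*} [Fintype ι] [PartialOrder ι]

/-- The block weight induced by `w`: the maximum of the weights of the coordinates. -/
def blockWt (w : F → ℕ) {m : ℕ} (v : Fin m → F) : ℕ :=
  Finset.univ.sup fun t => w (v t)

/-- `M_w`, the maximum weight of an element of `F`. -/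
def maxWt (w : F → ℕ) : ℕ := Finset.univ.sup w

/-- `D_r = {α ∈ F : w(α) = r}`. -/
def Dset (w : F → ℕ) (r : ℕ) : Finset F := Finset.univ.filter fun a => w a = r

/-- `D_r^k = {v ∈ F^k : w̃^k(v) = r}`. -/
def Dk (w : F → ℕ) (m r : ℕ) : Finset (Fin m → F) :=
  Finset.univ.filter fun v => blockWt w v = r

/-- The order ideal (down-set) of the poset generated by a finite set `A`. -/
def genIdeal (A : Finset ι) : Finset ι := Finset.univ.filter fun i => ∃ j ∈ A, i ≤ j

/-- The set of maximal elements of a finite set `I`. -/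
def maxElems (I : Finset ι) : Finset ι := I.filter fun i => ∀ j ∈ I, i ≤ j → j = i

/-- `I` is an order ideal (down-set) of the poset. -/
def IsIdeal (I : Finset ι) : Prop := ∀ a b : ι, a ≤ b → b ∈ I → a ∈ I

/-- The collection `𝓘_j^i` of ideals of cardinality `i` with exactly `j` maximal elements. -/
def idealsWithMax (ι : Type*) [Fintype ι] [PartialOrder ι] (j i : ℕ) : Finset (Finset ι) :=
  Finset.univ.filter fun I => IsIdeal I ∧ I.card = i ∧ (maxElems I).card = j

/-- The π-support of a block vector. -/
def suppPi (k : ι → ℕ) (x : ∀ i, Fin (k i) → F) : Finset ι :=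
  Finset.univ.filter fun i => x i ≠ 0

/-- The `(P,w,π)`-weight. -/
def wtP (w : F → ℕ) (k : ι → ℕ) (x : ∀ i, Fin (k i) → F) : ℕ :=
  ∑ i ∈ maxElems (genIdeal (suppPi k x)), blockWt w (x i)
    + maxWt w * ((genIdeal (suppPi k x)) \ maxElems (genIdeal (suppPi k x))).card

/-- The `(P,w,π)`-distance. -/
def dP (w : F → ℕ) (k : ι → ℕ) (x y : ∀ i, Fin (k i) → F) : ℕ := wtP w k (x - y)

/-- The support of a vector. -/
def suppV (v : ι → F) : Finset ι := Finset.univ.filter fun i => v i ≠ 0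

/-- The `(P,w)`-weight (the case where all blocks have dimension 1). -/
def wtPw (w : F → ℕ) (v : ι → F) : ℕ :=
  ∑ i ∈ maxElems (genIdeal (suppV v)), w (v i)
    + maxWt w * ((genIdeal (suppV v)) \ maxElems (genIdeal (suppV v))).card

/-!
Put `n = |ι|`, `q = |F|`, `k = ⌈log_q |C|⌉` and choose an ideal `I` with `n - k + 1` elements. Only
`q ^ (k - 1) < |C|` words are available on the `k - 1` coordinates outside `I`, so two distinct
codewords agree there. Their difference is supported in the ideal `I`, and a vector supported in an
ideal has weight at most `M_w` times the size of the ideal. Hence `d ≤ M_w * (n - k + 1)`.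
-/

theorem le_maxWt {α : Type*} [Fintype α] (w : α → ℕ) (a : α) : w a ≤ maxWt w :=
  Finset.le_sup (Finset.mem_univ a)

theorem maxWt_pos {α : Type*} [Fintype α] {w : α → ℕ} {a : α} (ha : w a ≠ 0) :
    0 < maxWt w :=
  (Nat.pos_of_ne_zero ha).trans_le (le_maxWt w a)

theorem maxElems_subset (I : Finset ι) : maxElems I ⊆ I :=
  Finset.filter_subset _ _

theorem IsIdeal.genIdeal_subset {A I : Finset ι} (hI : IsIdeal I) (hA : A ⊆ I) :
    genIdeal A ⊆ I := by
  intro i hi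
  obtain ⟨-, j, hj, hij⟩ := Finset.mem_filter.1 hi
  exact hI i j hij (hA hj)

theorem IsIdeal.insert_of_minimal {κ : Type*} [PartialOrder κ] {I : Finset κ} (hI : IsIdeal I)
    {m : κ} (hm : Minimal (· ∉ I) m) : IsIdeal (insert m I) := by
  intro a b hab hb
  rcases Finset.mem_insert.1 hb with rfl | hb
  · by_cases ha : a ∈ I
    · exact Finset.mem_insert_of_mem ha
    · exact Finset.mem_insert.2 (.inl (hm.eq_of_le ha hab))
  · exact Finset.mem_insert_of_mem (hI a b hab hb)

theorem exists_isIdeal_card_eq {r : ℕ} (hr : r ≤ Fintype.card ι) :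
    ∃ I : Finset ι, IsIdeal I ∧ I.card = r := by
  induction r with
  | zero => exact ⟨∅, fun _ _ _ hb => absurd hb (Finset.notMem_empty _), Finset.card_empty⟩
  | succ r ih =>
    obtain ⟨I, hI, rfl⟩ := ih (Nat.le_of_succ_le hr)
    obtain ⟨a, -, ha⟩ := Finset.exists_mem_notMem_of_card_lt_card (t := Finset.univ) hr
    obtain ⟨m, -, hm⟩ := exists_minimal_le_of_wellFoundedLT (· ∉ I) a ha
    exact ⟨insert m I, hI.insert_of_minimal hm, Finset.card_insert_of_notMem hm.prop⟩

theorem suppV_sub_subset_iff {K κ : Type*} [Field K] [Fintype κ] {x y : κ → K} {I : Finset κ} :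
    suppV (x - y) ⊆ I ↔ ∀ i ∈ Iᶜ, x i = y i := by
  simp only [suppV, Finset.subset_iff, Finset.mem_filter, Finset.mem_univ, true_and, Pi.sub_apply,
    sub_ne_zero, Finset.mem_compl, ne_eq, not_imp_comm]

theorem wtPw_le_maxWt_mul_card_genIdeal (w : F → ℕ) (v : ι → F) :
    wtPw w v ≤ maxWt w * (genIdeal (suppV v)).card := by
  set J := genIdeal (suppV v)
  calc wtPw w v
      ≤ maxWt w * (maxElems J).card + maxWt w * (J \ maxElems J).card := by
        refine Nat.add_le_add_right ?_ _
        rw [mul_comm]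
        exact Finset.sum_le_card_nsmul _ _ _ fun i _ => le_maxWt w (v i)
    _ = maxWt w * J.card := by
        rw [← mul_add, add_comm, Finset.card_sdiff_add_card_eq_card (maxElems_subset J)]

theorem IsIdeal.wtPw_le {I : Finset ι} (hI : IsIdeal I) (w : F → ℕ) {v : ι → F}
    (hv : suppV v ⊆ I) : wtPw w v ≤ maxWt w * I.card :=
  (wtPw_le_maxWt_mul_card_genIdeal w v).trans <|
    Nat.mul_le_mul_left _ <| Finset.card_le_card <| hI.genIdeal_subset hv

theorem exists_ne_forall_mem_eq_of_card_pow_lt {α κ : Type*} [Fintype α] {C : Finset (κ → α)}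
    {s : Finset κ} (h : Fintype.card α ^ s.card < C.card) :
    ∃ x ∈ C, ∃ y ∈ C, x ≠ y ∧ ∀ i ∈ s, x i = y i := by
  have hcard : (Finset.univ : Finset (s → α)).card < C.card := by
    rwa [Finset.card_univ, Fintype.card_fun, Fintype.card_coe]
  obtain ⟨x, hx, y, hy, hxy, heq⟩ := Finset.exists_ne_map_eq_of_card_lt_of_maps_to hcard
    (f := s.restrict) fun _ _ => Finset.mem_coe.2 (Finset.mem_univ _)
  exact ⟨x, hx, y, hy, hxy, fun i hi => congrFun heq ⟨i, hi⟩⟩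

theorem clog_card_le_card {α κ : Type*} [Fintype α] [Fintype κ] (C : Finset (κ → α)) :
    Nat.clog (Fintype.card α) C.card ≤ Fintype.card κ :=
  Nat.clog_le_of_le_pow <| (Finset.card_le_univ C).trans_eq Fintype.card_fun

/-- The minimum distance `d_{(P,w)}(C)` of a code `C`, with the junk value `0` when `C` has fewer
than two codewords. -/
def minDistPw (w : F → ℕ) (C : Finset (ι → F)) : ℕ :=
  sInf {s : ℕ | ∃ c₁ ∈ C, ∃ c₂ ∈ C, c₁ ≠ c₂ ∧ wtPw w (c₁ - c₂) = s}

theorem minDistPw_le_wtPw_sub (w : F → ℕ) {C : Finset (ι → F)} {x y : ι → F} (hx : x ∈ C)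
    (hy : y ∈ C) (hxy : x ≠ y) : minDistPw w C ≤ wtPw w (x - y) :=
  Nat.sInf_le ⟨x, hx, y, hy, hxy, rfl⟩

theorem IsIdeal.minDistPw_le {I : Finset ι} (hI : IsIdeal I) (w : F → ℕ) {C : Finset (ι → F)}
    (hC : Fintype.card F ^ Iᶜ.card < C.card) : minDistPw w C ≤ maxWt w * I.card := by
  obtain ⟨x, hx, y, hy, hxy, heq⟩ := exists_ne_forall_mem_eq_of_card_pow_lt hC
  exact (minDistPw_le_wtPw_sub w hx hy hxy).trans (hI.wtPw_le w (suppV_sub_subset_iff.2 heq))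

theorem minDistPw_le_maxWt_mul (w : F → ℕ) {C : Finset (ι → F)} (hC : 2 ≤ C.card) :
    minDistPw w C ≤ maxWt w * (Fintype.card ι - Nat.clog (Fintype.card F) C.card + 1) := by
  set k := Nat.clog (Fintype.card F) C.card
  have hq : 1 < Fintype.card F := Fintype.one_lt_card
  have hk : 0 < k := Nat.clog_pos hq hC
  have hkn : k ≤ Fintype.card ι := clog_card_le_card C
  obtain ⟨I, hI, hIcard⟩ :=
    exists_isIdeal_card_eq (show Fintype.card ι - k + 1 ≤ Fintype.card ι by lia)
  have hIcompl : Iᶜ.card = k.pred := by rw [Finset.card_compl, Nat.pred_eq_sub_one]; lia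
  rw [← hIcard]
  exact hI.minDistPw_le w (hIcompl ▸ Nat.pow_pred_clog_lt_self hq hC)

theorem stmt14_general (w : F → ℕ) (hw : 0 < maxWt w) (C : Finset (ι → F)) (hC : 2 ≤ C.card)
    (d : ℕ) (hd : d = sInf {s : ℕ | ∃ c₁ ∈ C, ∃ c₂ ∈ C, c₁ ≠ c₂ ∧ wtPw w (c₁ - c₂) = s}) :
    (d - 1) / maxWt w ≤ Fintype.card ι - Nat.clog (Fintype.card F) C.card := by
  set r := Fintype.card ι - Nat.clog (Fintype.card F) C.card
  have hdr : d ≤ maxWt w * (r + 1) := hd.trans_le (minDistPw_le_maxWt_mul w hC)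
  have hpos : 0 < maxWt w * (r + 1) := Nat.mul_pos hw r.succ_pos
  rw [← Nat.lt_succ_iff, Nat.div_lt_iff_lt_mul hw, mul_comm]
  exact Nat.lt_of_le_sub_one hpos (Nat.sub_le_sub_right hdr 1)

/-- the Singleton bound for `(P,w)`-codes:
`⌊(d_{(P,w)}(C) - 1)/M_w⌋ ≤ n - ⌈log_q |C|⌉`. -/
theorem stmt14 (w : F → ℕ) (hw0 : ∀ a : F, w a = 0 ↔ a = 0)
    (hwneg : ∀ a : F, w (-a) = w a) (hwadd : ∀ a b : F, w (a + b) ≤ w a + w b)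
    (C : Finset (ι → F)) (hC : 2 ≤ C.card)
    (d : ℕ) (hd : d = sInf {s : ℕ | ∃ c₁ ∈ C, ∃ c₂ ∈ C, c₁ ≠ c₂ ∧ wtPw w (c₁ - c₂) = s}) :
    (d - 1) / maxWt w ≤ Fintype.card ι - Nat.clog (Fintype.card F) C.card := by
  exact stmt14_general w (maxWt_pos ((hw0 1).not.2 one_ne_zero)) C hC d hd
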